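/- Let G = S_n with n a positive integer, n ≠ 6, let r be a ramification of G, and fix a map u_0 from the conjugacy classes of G to G with u_0(C) ∈ C for every class C. Then: (a) every ramification system with characters RSC(G, r, χ⃗, u) with ramification r is isomorphic to RSC(G, r, χ⃗', u_0) for some character data χ⃗'; and (b) two such systems RSC(G, r, χ⃗', u_0) and RSC(G, r, χ⃗'', u_0) are isomorphic if and only if for each C ∈ K_r(G) the multiset {χ'_C^{(i)} : 1 ≤ i ≤ r_C} equals the multiset {χ''_C^{(i)} : 1 ≤ i ≤ r_C}. Consequently, the isomorphism classes of RSCs of G with ramification r are in bijection with the families, indexed by C ∈ K_r(G), of multisets of size r_C of characters of Z_{u_0(C)}. -/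

import Mathlib

/-- A ramification system with characters `RSC(G, r, χ⃗, u)` on a group `G`:
a ramification `r` assigning a nonnegative integer `r C` to each conjugacy class `C`
of `G`; a map `u` from conjugacy classes to `G` with `u C ∈ C`; and, for each
conjugacy class `C`, an `r C`-tuple of characters of the centralizer `Z_{u C}`
(one-dimensional representations, i.e. group homomorphisms `Z_{u C} → ℂˣ`).
For classes with `r C = 0` the tuple of characters is empty, so `χ` carries
information exactly for the classes in `K_r(G) = {C : r C ≠ 0}`. -/
structure RSC (G : Type*) [Group G] where
  /-- the ramification -/
  r : ConjClasses G → ℕ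
  /-- a choice of representative of each conjugacy class -/
  u : ConjClasses G → G
  hu : ∀ C : ConjClasses G, ConjClasses.mk (u C) = C
  /-- the tuple of characters of `Z_{u C}` attached to each conjugacy class `C` -/
  chi : ∀ C : ConjClasses G, Fin (r C) →
    (Subgroup.centralizer ({u C} : Set G) →* ℂˣ)

/-- Isomorphism of ramification systems with characters (over the same group `G`),
following the definition of the paper: `RSC(G, r, χ⃗, u) ≅ RSC(G, r', χ⃗', u')` if there
are a group automorphism `φ` of `G`, for each conjugacy class `C` an element `h_C ∈ G`
with `φ(h_C u(C) h_C⁻¹) = u'(φ(C))`, and for each `C ∈ K_r(G)` a bijection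
`φ_C : I_C(r) ≃ I_{φ(C)}(r')` such that
`χ'_{φ(C)}^{(φ_C(i))}(φ(h_C h h_C⁻¹)) = χ_C^{(i)}(h)` for all `h ∈ Z_{u(C)}` and
all `i`. -/
def RSC.Iso {G : Type*} [Group G] (A B : RSC G) : Prop :=
  ∃ φ : G ≃* G,
    ∀ C : ConjClasses G, ∃ h : G,
      φ (h * A.u C * h⁻¹) = B.u (ConjClasses.map (φ : G →* G) C) ∧
      (A.r C ≠ 0 →
        ∃ e : Fin (A.r C) ≃ Fin (B.r (ConjClasses.map (φ : G →* G) C)),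
          ∀ (i : Fin (A.r C)) (x : G)
            (hx : x ∈ Subgroup.centralizer ({A.u C} : Set G))
            (hx' : φ (h * x * h⁻¹) ∈
              Subgroup.centralizer ({B.u (ConjClasses.map (φ : G →* G) C)} : Set G)),
            B.chi (ConjClasses.map (φ : G →* G) C) (e i) ⟨φ (h * x * h⁻¹), hx'⟩ =
              A.chi C i ⟨x, hx⟩)

section auxiliary
open Equiv

theorem swap_commute_of_ne {α : Type*} [DecidableEq α] {a b c d : α}
    (h : ¬ Commute (swap a b) (swap c d)) : a = c ∨ a = d ∨ b = c ∨ b = d := by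
  by_contra hc
  push Not at hc
  apply h
  obtain ⟨h1, h2, h3, h4⟩ := hc
  ext x
  simp only [Perm.mul_apply, swap_apply_def]
  grind

theorem swap_not_commute {α : Type*} [DecidableEq α] {o i j : α} (hi : i ≠ o) (hj : j ≠ o)
    (hij : i ≠ j) : ¬ Commute (swap o i) (swap o j) := by
  intro h
  have := congrArg (fun f : Perm α => f o) h.eq
  simp only [Perm.mul_apply, swap_apply_def] at this
  grind

theorem swap_mul_swap_pow {α : Type*} [DecidableEq α] [Fintype α] (a b c d : α)
    (hab : a ≠ b) (hcd : c ≠ d) :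
    (swap a b * swap c d) ^ 2 = 1 ∨ (swap a b * swap c d) ^ 3 = 1 := by
  have key : ∀ a b c : α, a ≠ b → a ≠ c → 
      (swap a b * swap a c) ^ 2 = 1 ∨ (swap a b * swap a c) ^ 3 = 1 := by
    intro a b c hab hac
    by_cases hbc : b = c
    · left; subst hbc; simp
    · right
      have := Perm.isThreeCycle_swap_mul_swap_same hab hac hbc
      rw [← this.orderOf]
      exact pow_orderOf_eq_one _
  by_cases hcom : Commute (swap a b) (swap c d)
  · left
    rw [hcom.mul_pow, pow_two, pow_two]; simp
  · rcases swap_commute_of_ne hcom with h | h | h | h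
    · subst h; exact key _ _ _ hab hcd
    · subst h; rw [swap_comm c a]; exact key _ _ _ hab hcd.symm
    · subst h; rw [swap_comm a b]; exact key _ _ _ hab.symm hcd
    · subst h; rw [swap_comm a b, swap_comm c b]; exact key _ _ _ hab.symm hcd.symm

theorem no_pattern {α : Type*} {m : ℕ} (v : Fin m ↪ α) (σ : Perm α) (s p : Perm (Fin m))
    (hs : ∀ i, σ (v i) = v (s i)) 
    (H : ∀ p : Perm α, (σ * (p * σ * p⁻¹)) ^ 2 = 1 ∨ (σ * (p * σ * p⁻¹)) ^ 3 = 1)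
    : (s * (p * s * p⁻¹)) ^ 2 = 1 ∨ (s * (p * s * p⁻¹)) ^ 3 = 1 := by
  classical
  let P := p.viaEmbedding v
  have hP : ∀ i, P (v i) = v (p i) := fun i => Perm.viaEmbedding_apply _ _ _
  have hP' : ∀ i, P⁻¹ (v i) = v (p⁻¹ i) := by
    intro i
    rw [Perm.inv_eq_iff_eq, hP]; simp
  have h1 : ∀ i, (σ * (P * σ * P⁻¹)) (v i) = v ((s * (p * s * p⁻¹)) i) := by
    intro i
    simp only [Perm.mul_apply, hP, hP', hs]
  have h2 : ∀ k i, ((σ * (P * σ * P⁻¹)) ^ k) (v i) = v (((s * (p * s * p⁻¹)) ^ k) i) := by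
    intro k
    induction k with
    | zero => simp
    | succ k ih => intro i; rw [pow_succ, pow_succ, Perm.mul_apply, h1, ih, ← Perm.mul_apply]
  rcases H P with h | h
  · left; ext1 i; apply v.injective; rw [← h2, h]; simp
  · right; ext1 i; apply v.injective; rw [← h2, h]; simp

theorem perm4 : ∀ σ : Perm (Fin 4), σ ^ 2 = 1 → (∀ x, σ x ≠ x) →
    ∀ p : Perm (Fin 4), Commute σ (p * σ * p⁻¹) := by
  unfold Commute SemiconjBy
  decide +kernel

theorem isSwap_of {n : ℕ} (h6 : n ≠ 6) (σ : Perm (Fin n)) (h1 : σ ≠ 1) (h2 : σ ^ 2 = 1)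
    (H : ∀ p : Perm (Fin n), (σ * (p * σ * p⁻¹)) ^ 2 = 1 ∨ (σ * (p * σ * p⁻¹)) ^ 3 = 1)
    (H4 : n = 4 → ∃ p, ¬ Commute σ (p * σ * p⁻¹)) : σ.IsSwap := by
  have hinv : ∀ x, σ (σ x) = x := by
    intro x; rw [← Perm.mul_apply, ← pow_two, h2]; rfl
  have : ∃ a, σ a ≠ a := by
    by_contra! hc
    exact h1 (Equiv.ext hc)
  obtain ⟨a, ha⟩ := this
  by_cases hc : ∃ c, c ≠ a ∧ c ≠ σ a ∧ σ c ≠ c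
  · exfalso
    obtain ⟨c, hca, hcb, hcc⟩ := hc
    by_cases hfix : ∃ e, σ e = e
    · obtain ⟨e, he⟩ := hfix
      have hinj : Function.Injective ![a, σ a, c, σ c, e] := by
        intro i j hij
        have A1 := hinv a
        have A2 := hinv c
        fin_cases i <;> fin_cases j <;> simp at hij ⊢ <;> grind
      have := no_pattern ⟨_, hinj⟩ σ (swap 0 1 * swap 2 3) (finRotate 5) (by
        intro i
        fin_cases i
        · exact rfl
        · exact hinv a
        · exact rfl
        · exact hinv c
        · exact he) H
      revert this
      decide +kernel
    · push Not at hfix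
      have hsup : σ.support = Finset.univ := by
        ext x; simpa using hfix x
      have h2n : 2 ∣ n := by
        have := Perm.two_dvd_card_support h2
        rw [hsup] at this
        simpa using this
      have h4n : 4 ≤ n := by
        have : ({a, σ a, c, σ c} : Finset (Fin n)).card = 4 := by
          have A1 := hinv a
          have A2 := hinv c
          rw [Finset.card_eq_succ]
          refine ⟨a, {σ a, c, σ c}, by simp; grind, rfl, ?_⟩
          rw [Finset.card_eq_three]
          exact ⟨_, _, _, by grind, by grind, by grind, rfl⟩
        rw [← this]
        simpa using Finset.card_le_univ ({a, σ a, c, σ c} : Finset (Fin n))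
      by_cases h4 : n = 4
      · obtain ⟨p, hp⟩ := H4 h4
        subst h4
        exact hp (perm4 σ h2 hfix p)
      have h8 : 8 ≤ n := by omega
      have ex : ∀ s : Finset (Fin n), s.card < n → ∃ x, x ∉ s := by
        intro s hs
        by_contra! hc
        have : s = Finset.univ := by ext; simp [hc]
        rw [this] at hs; simp at hs
      obtain ⟨f, hf⟩ := ex {a, σ a, c, σ c} (lt_of_le_of_lt Finset.card_le_four (by omega))
      obtain ⟨g, hg⟩ := ex {a, σ a, c, σ c, f, σ f}
        (lt_of_le_of_lt Finset.card_le_six (by omega))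
      simp only [Finset.mem_insert, Finset.mem_singleton, not_or] at hf hg
      have hinj : Function.Injective ![a, σ a, c, σ c, f, σ f, g, σ g] := by
        have A1 := hinv a
        have A2 := hinv c
        have A3 := hinv f
        have A4 := hinv g
        have B3 := hfix f
        have B4 := hfix g
        intro i j hij
        fin_cases i <;> fin_cases j <;> simp at hij ⊢ <;> grind
      have := no_pattern ⟨_, hinj⟩ σ (swap 0 1 * swap 2 3 * swap 4 5 * swap 6 7) (finRotate 8) (by
        intro i
        fin_cases i
        · exact rfl
        · exact hinv a
        · exact rfl
        · exact hinv c
        · exact rfl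
        · exact hinv f
        · exact rfl
        · exact hinv g) H
      revert this
      decide +kernel
  · push Not at hc
    refine ⟨a, σ a, ha.symm, ?_⟩
    ext1 x
    have := hc x
    have A1 := hinv a
    rw [swap_apply_def]
    grind

theorem map_isSwap {n : ℕ} (h6 : n ≠ 6) (φ : Perm (Fin n) ≃* Perm (Fin n)) (x y : Fin n)
    (hxy : x ≠ y) : (φ (swap x y)).IsSwap := by
  have conj : ∀ q : Perm (Fin n), φ (swap x y) * (φ q * φ (swap x y) * (φ q)⁻¹) =
      φ (swap x y * swap (q x) (q y)) := by
    intro q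
    rw [swap_apply_apply]; simp
  apply isSwap_of h6
  · intro h
    have : swap x y = 1 := φ.injective (by rw [h, map_one])
    exact hxy (swap_eq_refl_iff.1 this)
  · rw [← map_pow, pow_two]; simp
  · intro p
    obtain ⟨q, rfl⟩ := φ.surjective p
    rw [conj, ← map_pow, ← map_pow]
    rcases swap_mul_swap_pow x y (q x) (q y) hxy (fun h => hxy (q.injective h)) with h | h
    · left; rw [h, map_one]
    · right; rw [h, map_one]
  · intro h4
    have : ∃ z, z ≠ x ∧ z ≠ y := by
      by_contra! hc
      have : (Finset.univ : Finset (Fin n)) ⊆ {x, y} := by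
        intro z _; have := hc z; grind
      have := (Finset.card_le_card this).trans Finset.card_le_two
      simp at this; omega
    obtain ⟨z, hzx, hzy⟩ := this
    refine ⟨φ (swap y z), ?_⟩
    rw [← map_inv, ← map_mul, ← map_mul, ← swap_apply_apply, swap_apply_left,
      swap_apply_of_ne_of_ne hxy hzx.symm]
    intro h
    exact swap_not_commute hxy.symm hzx hzy.symm ((commute_map_iff φ.injective).1 h)

theorem aut_inner {n : ℕ} (hn : 0 < n) (h6 : n ≠ 6) (φ : Perm (Fin n) ≃* Perm (Fin n)) :
    ∃ g, ∀ x, φ x = g * x * g⁻¹ := by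
  let o : Fin n := ⟨0, hn⟩
  have hsw : ∀ i, i ≠ o → ∃ x y, x ≠ y ∧ φ (swap o i) = swap x y := fun i hi =>
    map_isSwap h6 φ o i hi.symm
  have hnc : ∀ i j, i ≠ o → j ≠ o → i ≠ j → ¬ Commute (φ (swap o i)) (φ (swap o j)) :=
    fun i j hi hj hij h => swap_not_commute hi hj hij ((commute_map_iff φ.injective).1 h)
  have main : ∃ a, ∀ i, i ≠ o → ∃ b, b ≠ a ∧ φ (swap o i) = swap a b := by
    by_cases h1 : ∃ i, i ≠ o
    swap
    · exact ⟨o, fun i hi => (h1 ⟨i, hi⟩).elim⟩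
    obtain ⟨i, hi⟩ := h1
    by_cases h2 : ∃ j, j ≠ o ∧ i ≠ j
    swap
    · push Not at h2
      obtain ⟨x, y, hxy, h⟩ := hsw i hi
      refine ⟨x, fun j hj => ⟨y, hxy.symm, ?_⟩⟩
      rw [← h2 j hj, h]
    obtain ⟨j, hj, hij⟩ := h2
    have : ∃ a b c, a ≠ b ∧ a ≠ c ∧ b ≠ c ∧ φ (swap o i) = swap a b ∧
        φ (swap o j) = swap a c := by
      obtain ⟨x, y, hxy, h⟩ := hsw i hi
      obtain ⟨z, w, hzw, h'⟩ := hsw j hj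
      have hc := hnc i j hi hj hij
      have hne : swap x y ≠ swap z w := by
        intro he
        rw [h, h', he] at hc
        exact hc (Commute.refl _)
      rw [h, h'] at hc
      have c1 := swap_comm x y
      have c2 := swap_comm z w
      rcases swap_commute_of_ne hc with e | e | e | e
      · exact ⟨x, y, w, by grind, by grind, by grind, by grind, by grind⟩
      · exact ⟨x, y, z, by grind, by grind, by grind, by grind, by grind⟩
      · exact ⟨y, x, w, by grind, by grind, by grind, by grind, by grind⟩
      · exact ⟨y, x, z, by grind, by grind, by grind, by grind, by grind⟩
    obtain ⟨a, b, c, hab, hac, hbc, hi', hj'⟩ := this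
    refine ⟨a, fun k hk => ?_⟩
    by_cases hki : k = i
    · subst hki; exact ⟨b, hab.symm, hi'⟩
    by_cases hkj : k = j
    · subst hkj; exact ⟨c, hac.symm, hj'⟩
    obtain ⟨x, y, hxy, h⟩ := hsw k hk
    have e1 := hnc i k hi hk (Ne.symm hki)
    have e2 := hnc j k hj hk (Ne.symm hkj)
    rw [hi', h] at e1
    rw [hj', h] at e2
    have e1 := swap_commute_of_ne e1
    have e2 := swap_commute_of_ne e2
    have c1 := swap_comm x y
    by_cases hax : a = x
    · exact ⟨y, by grind, by grind⟩
    by_cases hay : a = y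
    · exact ⟨x, by grind, by grind⟩
    exfalso
    have hbc' : swap x y = swap b c := by grind [swap_comm b c]
    have e : swap b c = swap a b * swap a c * (swap a b)⁻¹ := by
      rw [← swap_apply_apply, swap_apply_left, swap_apply_of_ne_of_ne hac.symm hbc.symm]
    rw [hbc', e, ← hi', ← hj', ← map_inv, ← map_mul, ← map_mul] at h
    have h := φ.injective h
    rw [← swap_apply_apply, swap_apply_left, swap_apply_of_ne_of_ne hj hij.symm] at h
    have := congrArg (fun f : Perm (Fin n) => f o) h
    simp only [swap_apply_def] at this
    grind
  obtain ⟨a, ha⟩ := main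
  choose! f hf1 hf2 using ha
  let g0 : Fin n → Fin n := fun i => if i = o then a else f i
  have hg0 : Function.Injective g0 := by
    intro i j hij
    simp only [g0] at hij
    by_cases hi : i = o <;> by_cases hj : j = o
    · rw [hi, hj]
    · simp [hi, hj] at hij; exact absurd hij.symm (hf1 j hj)
    · simp [hi, hj] at hij; exact absurd hij (hf1 i hi)
    · simp [hi, hj] at hij
      have : swap o i = swap o j := φ.injective (by rw [hf2 i hi, hf2 j hj, hij])
      simpa using congrArg (fun f : Perm (Fin n) => f o) this
  let g : Perm (Fin n) := Equiv.ofBijective g0 (Finite.injective_iff_bijective.1 hg0)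
  have hgo : g o = a := by simp [g, g0]
  have hgi : ∀ i, i ≠ o → g i = f i := by intro i hi; simp [g, g0, hi]
  have k1 : ∀ i, i ≠ o → φ (swap o i) = g * swap o i * g⁻¹ := by
    intro i hi
    rw [← swap_apply_apply, hgo, hgi i hi, hf2 i hi]
  have k2 : ∀ i j, i ≠ j → φ (swap i j) = g * swap i j * g⁻¹ := by
    intro i j hij
    by_cases hi : i = o
    · subst hi; exact k1 j hij.symm
    by_cases hj : j = o
    · subst hj; rw [swap_comm]; exact k1 i hij
    have : swap i j = swap o i * swap o j * (swap o i)⁻¹ := by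
      rw [← swap_apply_apply, swap_apply_left, swap_apply_of_ne_of_ne hj hij.symm]
    rw [this, map_mul, map_mul, map_inv, k1 i hi, k1 j hj]
    group
  refine ⟨g, fun x => ?_⟩
  induction x using Perm.swap_induction_on with
  | one => simp
  | swap_mul f x y hxy ih => rw [map_mul, ih, k2 x y hxy]; group

theorem exists_equiv_of_map_eq {X : Type*} {a b : ℕ} (f : Fin a → X) (g : Fin b → X)
    (h : Multiset.map f Finset.univ.val = Multiset.map g Finset.univ.val) :
    ∃ e : Fin a ≃ Fin b, ∀ i, g (e i) = f i := by
  classical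
  have hc : ∀ x, Nonempty ({i // f i = x} ≃ {j // g j = x}) := by
    intro x
    have := congrArg (Multiset.count x) h
    rw [Multiset.count_map, Multiset.count_map] at this
    refine ⟨Fintype.equivOfCardEq ?_⟩
    rw [Fintype.card_subtype, Fintype.card_subtype]
    simp only [Finset.card_def, Finset.filter_val]
    simpa only [eq_comm] using this
  let E := fun x => (hc x).some
  refine ⟨(Equiv.sigmaFiberEquiv f).symm.trans
    ((Equiv.sigmaCongrRight E).trans (Equiv.sigmaFiberEquiv g)), fun i => ?_⟩
  exact (E (f i) ⟨i, rfl⟩).2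

theorem map_eq_of_equiv {X : Type*} {a b : ℕ} (f : Fin a → X) (g : Fin b → X)
    (e : Fin a ≃ Fin b) (he : ∀ i, g (e i) = f i) :
    Multiset.map f Finset.univ.val = Multiset.map g Finset.univ.val := by
  have : f = g ∘ e := by ext i; simp [he]
  rw [this, ← Multiset.map_map, Multiset.map_univ_val_equiv]

section transport
variable {G : Type*} [Group G]

theorem mem_cent_iff {a x : G} : x ∈ Subgroup.centralizer ({a} : Set G) ↔ a * x = x * a := by
  rw [Subgroup.mem_centralizer_iff]; simp

theorem conj_mem_cent {k a b x : G} (hk : k * a * k⁻¹ = b)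
    (hx : x ∈ Subgroup.centralizer ({b} : Set G)) :
    k⁻¹ * x * k ∈ Subgroup.centralizer ({a} : Set G) := by
  rw [mem_cent_iff] at hx ⊢
  have : a = k⁻¹ * b * k := by rw [← hk]; group
  rw [this]
  calc k⁻¹ * b * k * (k⁻¹ * x * k) = k⁻¹ * (b * x) * k := by group
    _ = k⁻¹ * (x * b) * k := by rw [hx]
    _ = _ := by group

/-- Transport of a character of `Z_a` to `Z_b` where `b = k a k⁻¹`. -/
def transChar {k a b : G} (hk : k * a * k⁻¹ = b)
    (c : Subgroup.centralizer ({a} : Set G) →* ℂˣ) :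
    Subgroup.centralizer ({b} : Set G) →* ℂˣ where
  toFun x := c ⟨k⁻¹ * x.1 * k, conj_mem_cent hk x.2⟩
  map_one' := by
    rw [← map_one c]; congr 1; ext; simp
  map_mul' x y := by
    rw [← map_mul c]; congr 1; ext; simp [mul_assoc]

theorem char_conj {b : G} (c : Subgroup.centralizer ({b} : Set G) →* ℂˣ) (w x y : G)
    (hw : w * b * w⁻¹ = b) (hx : x ∈ Subgroup.centralizer ({b} : Set G))
    (hy : y ∈ Subgroup.centralizer ({b} : Set G)) (h : y = w * x * w⁻¹) :
    c ⟨y, hy⟩ = c ⟨x, hx⟩ := by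
  have hw' : w ∈ Subgroup.centralizer ({b} : Set G) := by
    rw [mem_cent_iff]; nth_rw 1 [← hw]; group
  have : (⟨y, hy⟩ : Subgroup.centralizer ({b} : Set G)) = ⟨w, hw'⟩ * ⟨x, hx⟩ * ⟨w, hw'⟩⁻¹ := by
    ext; simp [h]
  rw [this, map_mul, map_mul, map_inv, mul_comm (c ⟨w, hw'⟩), mul_inv_cancel_right]

theorem transChar_self {k b : G} (hk : k * b * k⁻¹ = b)
    (c : Subgroup.centralizer ({b} : Set G) →* ℂˣ) : transChar hk c = c := by
  ext1 x
  exact char_conj c k⁻¹ x.1 _ (by nth_rw 1 [← hk]; group) x.2 _ (by group)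

variable (u₀ : ConjClasses G → G) (hu₀ : ∀ C, ConjClasses.mk (u₀ C) = C)

theorem exists_conj (u₀ : ConjClasses G → G) (hu₀ : ∀ C, ConjClasses.mk (u₀ C) = C) (A : RSC G) (C : ConjClasses G) : ∃ k : G, k * A.u C * k⁻¹ = u₀ C := by
  have : IsConj (A.u C) (u₀ C) := by
    rw [← ConjClasses.mk_eq_mk_iff_isConj, A.hu, hu₀]
  exact isConj_iff.1 this

/-- The character tuples of `A`, transported to the centralizers of `u₀ C`. -/
noncomputable def RSC.psi (A : RSC G) (C : ConjClasses G) (i : Fin (A.r C)) :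
    Subgroup.centralizer ({u₀ C} : Set G) →* ℂˣ :=
  transChar (exists_conj u₀ hu₀ A C).choose_spec (A.chi C i)

theorem RSC.psi_eq (A : RSC G) (C : ConjClasses G) :
    ∃ (k : G) (hk : k * A.u C * k⁻¹ = u₀ C), ∀ i,
      A.psi u₀ hu₀ C i = transChar hk (A.chi C i) :=
  ⟨_, (exists_conj u₀ hu₀ A C).choose_spec, fun _ => rfl⟩

/-- The multiset of transported characters. -/
noncomputable def RSC.mult (A : RSC G) (C : ConjClasses G) :
    Multiset (Subgroup.centralizer ({u₀ C} : Set G) →* ℂˣ) :=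
  Multiset.map (A.psi u₀ hu₀ C) Finset.univ.val

theorem RSC.card_mult (A : RSC G) (C : ConjClasses G) :
    Multiset.card (A.mult u₀ hu₀ C) = A.r C := by
  simp [RSC.mult]

theorem map_inner_eq (φ : G ≃* G) (g : G) (hg : ∀ x, φ x = g * x * g⁻¹) (C : ConjClasses G) :
    ConjClasses.map (φ : G →* G) C = C := by
  obtain ⟨x, rfl⟩ := ConjClasses.mk_surjective C
  change ConjClasses.mk (φ x) = _
  rw [ConjClasses.mk_eq_mk_iff_isConj, hg]
  exact (isConj_iff.2 ⟨g, rfl⟩).symm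

theorem RSC.iso_iff (hin : ∀ φ : G ≃* G, ∃ g, ∀ x, φ x = g * x * g⁻¹) (A B : RSC G)
    (hr : A.r = B.r) :
    A.Iso B ↔ ∀ C, A.mult u₀ hu₀ C = B.mult u₀ hu₀ C := by
  constructor
  · rintro ⟨φ, H⟩ C
    obtain ⟨g, hg⟩ := hin φ
    obtain ⟨h, h1, h2⟩ := H C
    rw [map_inner_eq φ g hg C] at h1 h2
    by_cases h0 : A.r C = 0
    · have e1 := A.card_mult u₀ hu₀ C
      have e2 := B.card_mult u₀ hu₀ C
      rw [← hr] at e2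
      rw [h0, Multiset.card_eq_zero] at e1 e2
      rw [e1, e2]
    obtain ⟨e, he⟩ := h2 h0
    apply map_eq_of_equiv _ _ e
    intro i
    ext1 y
    obtain ⟨k, kA, pA⟩ := A.psi_eq u₀ hu₀ C
    obtain ⟨l, kB, pB⟩ := B.psi_eq u₀ hu₀ C
    rw [pA, pB]
    simp only [transChar, MonoidHom.coe_mk, OneHom.coe_mk]
    have hz := conj_mem_cent kB y.2
    rw [hg] at h1
    have e3 : φ (h * (k⁻¹ * y.1 * k) * h⁻¹) =
        (g * h * k⁻¹ * l) * (l⁻¹ * y.1 * l) * (g * h * k⁻¹ * l)⁻¹ := by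
      rw [hg]; group
    have hw : (g * h * k⁻¹ * l) * B.u C * (g * h * k⁻¹ * l)⁻¹ = B.u C := by
      calc _ = g * h * k⁻¹ * (l * B.u C * l⁻¹) * k * h⁻¹ * g⁻¹ := by group
        _ = g * (h * A.u C * h⁻¹) * g⁻¹ := by rw [kB, ← kA]; group
        _ = _ := h1
    have hm : φ (h * (k⁻¹ * y.1 * k) * h⁻¹) ∈ Subgroup.centralizer ({B.u C} : Set G) := by
      rw [e3]
      have hw' : g * h * k⁻¹ * l ∈ Subgroup.centralizer ({B.u C} : Set G) := by
        rw [mem_cent_iff]; nth_rw 1 [← hw]; group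
      exact mul_mem (mul_mem hw' hz) (inv_mem hw')
    rw [← he i _ (conj_mem_cent kA y.2) hm]
    exact (char_conj _ _ _ _ hw hz hm e3).symm
  · intro H
    refine ⟨MulEquiv.refl G, fun C => ?_⟩
    rw [map_inner_eq (MulEquiv.refl G) 1 (by simp) C]
    have HC := exists_equiv_of_map_eq _ _ (H C)
    obtain ⟨e, he⟩ := HC
    obtain ⟨k, kA, pA⟩ := A.psi_eq u₀ hu₀ C
    obtain ⟨l, kB, pB⟩ := B.psi_eq u₀ hu₀ C
    simp only [pA, pB] at he
    have h1 : l⁻¹ * k * A.u C * (l⁻¹ * k)⁻¹ = B.u C := by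
      calc _ = l⁻¹ * (k * A.u C * k⁻¹) * l := by group
        _ = _ := by rw [kA, ← kB]; group
    refine ⟨l⁻¹ * k, h1, fun _ => ⟨e, fun i x hx hx' => ?_⟩⟩
    have hy : k * x * k⁻¹ ∈ Subgroup.centralizer ({u₀ C} : Set G) := by
      have := conj_mem_cent (k := k⁻¹) (a := u₀ C) (b := A.u C) (x := x)
        (by rw [← kA]; group) hx
      simpa using this
    have := DFunLike.congr_fun (he i) ⟨_, hy⟩
    simp only [transChar, MonoidHom.coe_mk, OneHom.coe_mk] at this
    convert this using 3
    · simp [mul_assoc]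
    · group

theorem RSC.exists_std (f : ∀ C, Multiset (Subgroup.centralizer ({u₀ C} : Set G) →* ℂˣ))
    (r : ConjClasses G → ℕ) (hf : ∀ C, Multiset.card (f C) = r C) :
    ∃ B : RSC G, B.r = r ∧ B.u = u₀ ∧ ∀ C, B.mult u₀ hu₀ C = f C := by
  have : ∀ C, ∃ t : Fin (r C) → (Subgroup.centralizer ({u₀ C} : Set G) →* ℂˣ),
      Multiset.map t Finset.univ.val = f C := by
    intro C
    obtain ⟨l, hl⟩ := Quot.exists_rep (f C)
    have hl : (l : Multiset _) = f C := hl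
    have h2 := hf C
    rw [← hl, Multiset.coe_card] at h2
    rw [← hl, ← h2]
    exact ⟨l.get, by rw [Fin.univ_val_map, List.ofFn_get]⟩
  choose t ht using this
  refine ⟨⟨r, u₀, hu₀, t⟩, rfl, rfl, fun C => ?_⟩
  rw [← ht C, RSC.mult]
  congr 1
  ext1 i
  exact transChar_self _ _

end transport


end auxiliary


/-- Let `G = S_n` with `n` a positive integer, `n ≠ 6`, let `r` be a ramification of
`G`, and fix a map `u₀` from the conjugacy classes of `G` to `G` with `u₀(C) ∈ C` for
every class `C`.  Then: (a) every ramification system with characters with ramification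
`r` is isomorphic to one of the form `RSC(G, r, χ⃗', u₀)`; (b) two systems
`RSC(G, r, χ⃗', u₀)` and `RSC(G, r, χ⃗'', u₀)` are isomorphic if and only if for each
`C ∈ K_r(G)` the multisets `{χ'_C^{(i)}}` and `{χ''_C^{(i)}}` coincide (same number of
occurrences of each character `ξ` of `Z_{u₀(C)}`); consequently, (c) the isomorphism
classes of RSCs of `G` with ramification `r` are in bijection with the families,
indexed by the conjugacy classes, of multisets of characters of `Z_{u₀(C)}` of size
`r_C` (such a family carries information exactly at the classes `C ∈ K_r(G)`, since at
classes with `r_C = 0` the multiset is forced to be empty). -/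
theorem rsc_representatives_symmetricGroup (n : ℕ) (hn : 0 < n) (h6 : n ≠ 6)
    (r : ConjClasses (Equiv.Perm (Fin n)) → ℕ)
    (u₀ : ConjClasses (Equiv.Perm (Fin n)) → Equiv.Perm (Fin n))
    (hu₀ : ∀ C : ConjClasses (Equiv.Perm (Fin n)), ConjClasses.mk (u₀ C) = C) :
    (∀ A : RSC (Equiv.Perm (Fin n)), A.r = r →
      ∃ B : RSC (Equiv.Perm (Fin n)), B.r = r ∧ B.u = u₀ ∧ RSC.Iso A B) ∧
    (∀ A B : RSC (Equiv.Perm (Fin n)),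
      A.r = r → B.r = r → A.u = u₀ → B.u = u₀ →
        (RSC.Iso A B ↔
          ∀ C : ConjClasses (Equiv.Perm (Fin n)), r C ≠ 0 →
            ∀ ξ : Subgroup.centralizer ({u₀ C} : Set (Equiv.Perm (Fin n))) →* ℂˣ,
              Nat.card {i : Fin (A.r C) //
                ∀ (x : Equiv.Perm (Fin n))
                  (hx : x ∈ Subgroup.centralizer ({u₀ C} : Set (Equiv.Perm (Fin n))))
                  (hx' : x ∈ Subgroup.centralizer ({A.u C} : Set (Equiv.Perm (Fin n)))),
                  A.chi C i ⟨x, hx'⟩ = ξ ⟨x, hx⟩} =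
              Nat.card {j : Fin (B.r C) //
                ∀ (x : Equiv.Perm (Fin n))
                  (hx : x ∈ Subgroup.centralizer ({u₀ C} : Set (Equiv.Perm (Fin n))))
                  (hx' : x ∈ Subgroup.centralizer ({B.u C} : Set (Equiv.Perm (Fin n)))),
                  B.chi C j ⟨x, hx'⟩ = ξ ⟨x, hx⟩})) ∧
    Nonempty
      ((Quot fun A B : {A : RSC (Equiv.Perm (Fin n)) // A.r = r} =>
          RSC.Iso A.1 B.1) ≃
        {f : ∀ C : ConjClasses (Equiv.Perm (Fin n)),
            Multiset (Subgroup.centralizer ({u₀ C} : Set (Equiv.Perm (Fin n))) →* ℂˣ) //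
          ∀ C, Multiset.card (f C) = r C}) := by
  have hin := fun φ => aut_inner hn h6 φ
  refine ⟨?_, ?_, ?_⟩
  · intro A hA
    obtain ⟨B, h1, h2, h3⟩ := RSC.exists_std u₀ hu₀ (A.mult u₀ hu₀) r
      (fun C => by rw [RSC.card_mult, hA])
    exact ⟨B, h1, h2, (RSC.iso_iff u₀ hu₀ hin A B (by rw [hA, h1])).2 fun C => (h3 C).symm⟩
  · intro A B hA hB hAu hBu
    rw [RSC.iso_iff u₀ hu₀ hin A B (by rw [hA, hB])]
    have key : ∀ A : RSC (Equiv.Perm (Fin n)), A.u = u₀ → ∀ C,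
        ∀ ξ : Subgroup.centralizer ({u₀ C} : Set (Equiv.Perm (Fin n))) →* ℂˣ,
          ∀ [DecidableEq (Subgroup.centralizer ({u₀ C} : Set (Equiv.Perm (Fin n))) →* ℂˣ)],
              Nat.card {i : Fin (A.r C) //
                ∀ (x : Equiv.Perm (Fin n))
                  (hx : x ∈ Subgroup.centralizer ({u₀ C} : Set (Equiv.Perm (Fin n))))
                  (hx' : x ∈ Subgroup.centralizer ({A.u C} : Set (Equiv.Perm (Fin n)))),
                  A.chi C i ⟨x, hx'⟩ = ξ ⟨x, hx⟩} = (A.mult u₀ hu₀ C).count ξ := by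
      intro A hA C ξ _
      subst hA
      rw [RSC.mult, Multiset.count_map]
      have e : ∀ i, A.psi A.u hu₀ C i = A.chi C i := fun i => transChar_self _ _
      simp only [e]
      rw [← Finset.filter_val, ← Finset.card_def, ← Fintype.card_subtype,
        ← Nat.card_eq_fintype_card]
      refine Nat.card_congr (Equiv.subtypeEquivRight fun i => ?_)
      constructor
      · intro h; ext1 x; exact (h x.1 x.2 x.2).symm
      · intro h x hx hx'; rw [h]
    classical
    constructor
    · intro h C _ ξ
      rw [key A hAu, key B hBu, h C]
    · intro h C
      by_cases h0 : r C = 0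
      · have e1 := A.card_mult u₀ hu₀ C
        have e2 := B.card_mult u₀ hu₀ C
        rw [hA, h0, Multiset.card_eq_zero] at e1
        rw [hB, h0, Multiset.card_eq_zero] at e2
        rw [e1, e2]
      · ext ξ
        rw [← key A hAu, ← key B hBu]
        exact h C h0 ξ
  · refine ⟨Equiv.ofBijective (Quot.lift
      (fun A => ⟨A.1.mult u₀ hu₀, fun C => by rw [RSC.card_mult, A.2]⟩) ?_) ⟨?_, ?_⟩⟩
    · intro A B h
      apply Subtype.ext
      funext C
      exact (RSC.iso_iff u₀ hu₀ hin A.1 B.1 (by rw [A.2, B.2])).1 h C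
    · rintro ⟨A⟩ ⟨B⟩ h
      apply Quot.sound
      apply (RSC.iso_iff u₀ hu₀ hin A.1 B.1 (by rw [A.2, B.2])).2
      intro C
      exact congrFun (congrArg Subtype.val h) C
    · rintro ⟨f, hf⟩
      obtain ⟨B, h1, h2, h3⟩ := RSC.exists_std u₀ hu₀ f r hf
      exact ⟨Quot.mk _ ⟨B, h1⟩, Subtype.ext (funext h3)⟩
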